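/- arXiv:2503.04547 — 3 statements merged into one kernel-verified Lean document; each statement's English description precedes it below -/
import Mathlib

section
/- Suppose p = b+2 and ℓ = b+2 (= p). Then the trace of the linear endomorphism f ↦ ρ(g·f) of W equals (1/π_ℓ)·{ (ℓ−1)·e_ℓ(n_1−1,…,n_ℓ−1) + e_{ℓ−1}(n_1−1,…,n_ℓ−1) + (−1)^b }. -/
open Finset MvPolynomial

noncomputable section

/-- Value of the elementary symmetric polynomial `e_k` at the family `v` restricted to `A`. -/
def esymVal {α F : Type*} [DecidableEq α] [CommRing F] (A : Finset α) (k : ℕ) (v : α → F) : F :=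
  ∑ B ∈ A.powersetCard k, ∏ i ∈ B, v i

/-- Pochhammer symbol `(a)_k = a (a+1) ⋯ (a+k-1)`. -/
def poch (a : ℚ) (k : ℕ) : ℚ := ∏ i ∈ Finset.range k, (a + (i : ℚ))

variable {p : ℕ}

/-- The index in `Fin (∑ t, n t)` of the `i`-th element of the `j`-th consecutive block. -/
def emb (n : Fin p → ℕ) (j : Fin p) (i : Fin (n j)) : Fin (∑ t, n t) :=
  ⟨(∑ t ∈ Finset.univ.filter (fun t => t < j), n t) + i, by
    have hj : j ∉ Finset.univ.filter (fun t => t < j) := by simp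
    have h2 : ∑ t ∈ insert j (Finset.univ.filter (fun t => t < j)), n t ≤ ∑ t, n t :=
      Finset.sum_le_sum_of_subset (Finset.subset_univ _)
    rw [Finset.sum_insert hj] at h2
    have := i.isLt
    omega⟩

/-- The Young subgroup: permutations mapping each block onto itself. -/
def youngGroup (n : Fin p → ℕ) : Finset (Equiv.Perm (Fin (∑ t, n t))) :=
  Finset.univ.filter fun w => ∀ (j : Fin p) (i : Fin (n j)), ∃ i' : Fin (n j),
    w (emb n j i) = emb n j i'

/-- The action of a permutation of the variables on polynomials, as a linear map. -/
def permAct {σ : Type*} (w : Equiv.Perm σ) :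
    MvPolynomial σ ℚ →ₗ[ℚ] MvPolynomial σ ℚ :=
  (MvPolynomial.rename ⇑w).toLinearMap

/-- Averaging operator over the Young subgroup. -/
def rho (n : Fin p → ℕ) :
    MvPolynomial (Fin (∑ t, n t)) ℚ →ₗ[ℚ] MvPolynomial (Fin (∑ t, n t)) ℚ :=
  ((youngGroup n).card : ℚ)⁻¹ • ∑ h ∈ youngGroup n, permAct h

/-- The alternating (Vandermonde) polynomial in the variables `x_{t 0}, …, x_{t b}`. -/
def Delta {N b : ℕ} (t : Fin (b + 1) → Fin N) : MvPolynomial (Fin N) ℚ :=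
  ∏ q ∈ Finset.univ.filter (fun q : Fin (b + 1) × Fin (b + 1) => q.1 < q.2),
    (X (t q.1) - X (t q.2))

/-- The span of all `Δ(x_{i₁},…,x_{i_{b+1}})` with `i₁ < ⋯ < i_{b+1}`. -/
def hookSpan (N b : ℕ) : Submodule ℚ (MvPolynomial (Fin N) ℚ) :=
  Submodule.span ℚ {f | ∃ t : Fin (b + 1) → Fin N, StrictMono t ∧ f = Delta t}

/-- The first `ℓ` block labels. -/
def firstL (p ℓ : ℕ) : Finset (Fin p) := Finset.univ.filter fun i => (i : ℕ) < ℓ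

/-!
Write `p = b + 2` and let `V` be the `p × p` matrix whose rows are the normalized power sums, of
degrees `p - 1, …, 0`, of the `p` blocks of variables. Averaging `Δ` over the Young subgroup gives
`0` if two of its variables lie in the same block, and otherwise, up to sign, the cofactor `D_j` of
`V` at row `j` and column `0`, where `j` is the omitted block. As the last column of `V` consists of
ones, `∑ D_j = 0`, and this is the only linear relation between the `D_j`.

The operator `f ↦ ρ(g·f)` maps the cofactor `D_j` of `V` to the one of `M V`, where `M i j` is the
proportion of block `i` that `g` moves into block `j`. It therefore acts on the `D_j` through
`adj M`, which acts as the scalar `det M` on the relation because the rows of `M` sum to `1`. Its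
trace is `tr (adj M) - det M`. For the `ℓ`-cycle, `M` has diagonal entries `(n_i - 1) / n_i`,
entries `1 / n_i` in the positions `(i, i + 1)` modulo `p`, and zeros elsewhere.
-/

open scoped BigOperators

section LinearAlgebra

lemma trace_eq_trace_sub_of_ker_eq_span_singleton {K E V : Type*} [Field K] [AddCommGroup E]
    [Module K E] [FiniteDimensional K E] [AddCommGroup V] [Module K V] [FiniteDimensional K V]
    {φ : E →ₗ[K] V} {A : E →ₗ[K] E} {T : V →ₗ[K] V} {v : E} {μ : K}
    (hφ : T ∘ₗ φ = φ ∘ₗ A) (hT : LinearMap.range T ≤ LinearMap.range φ)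
    (hker : LinearMap.ker φ = Submodule.span K {v}) (hv : v ≠ 0) (hAv : A v = μ • v) :
    LinearMap.trace K V T = LinearMap.trace K E A - μ := by
  -- `T` factors as `φ ∘ ψ`, so `T` and `ψ ∘ φ` have the same trace, while `A - ψ ∘ φ` takes values
  -- in `ker φ`, on which it is the scalar `μ`.
  obtain ⟨σ, hσ⟩ := φ.rangeRestrict.exists_rightInverse_of_surjective φ.range_rangeRestrict
  let ψ : V →ₗ[K] E := σ ∘ₗ T.codRestrict (LinearMap.range φ) fun x => hT ⟨x, rfl⟩
  have hψ : φ ∘ₗ ψ = T := by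
    ext x
    exact congrArg Subtype.val (LinearMap.congr_fun hσ _)
  let B : E →ₗ[K] E := A - ψ ∘ₗ φ
  have hB : ∀ x, B x ∈ LinearMap.ker φ := fun x => by
    have hφx : T (φ x) = φ (A x) := LinearMap.congr_fun hφ x
    have hψx : φ (ψ (φ x)) = T (φ x) := LinearMap.congr_fun hψ (φ x)
    simp [B, hψx, hφx]
  have hφv : φ v = 0 :=
    LinearMap.mem_ker.1 (hker.symm ▸ Submodule.mem_span_singleton_self v)
  have hBker : B.restrict (fun x (_ : x ∈ LinearMap.ker φ) => hB x) = μ • LinearMap.id := by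
    ext ⟨x, hx⟩
    obtain ⟨c, rfl⟩ := Submodule.mem_span_singleton.1 (hker ▸ hx)
    simp [B, hφv, hAv, smul_comm c μ]
  have hBtrace : LinearMap.trace K E B = μ := by
    rw [← LinearMap.trace_restrict_eq_of_forall_mem _ B hB, hBker, map_smul, LinearMap.trace_id,
      hker, finrank_span_singleton hv, Nat.cast_one, smul_eq_mul, mul_one]
  rw [← hψ, LinearMap.trace_comp_comm', ← hBtrace, ← map_sub, sub_sub_cancel]

lemma addMonoidHomClass_map_expect {F κ M M' : Type*} [AddCommMonoid M] [Module ℚ≥0 M]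
    [AddCommMonoid M'] [Module ℚ≥0 M'] [FunLike F M M'] [AddMonoidHomClass F M M'] (L : F)
    (s : Finset κ) (v : κ → M) : L (𝔼 i ∈ s, v i) = 𝔼 i ∈ s, L (v i) := by
  simp only [Finset.expect, map_nnrat_smul, map_sum]

lemma multilinearMap_map_expect {κ M' : Type*} {α M : κ → Type*} [Fintype κ] [DecidableEq κ]
    [∀ k, AddCommMonoid (M k)] [∀ k, Module ℚ≥0 (M k)] [AddCommMonoid M'] [Module ℚ≥0 M']
    (L : MultilinearMap ℚ≥0 M M') (A : ∀ k, Finset (α k)) (v : ∀ k, α k → M k) :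
    L (fun k => 𝔼 x ∈ A k, v k x) = 𝔼 r ∈ Fintype.piFinset A, L fun k => v k (r k) := by
  simp only [Finset.expect, L.map_smul_univ, L.map_sum_finset, Fintype.card_piFinset, Nat.cast_prod,
    Finset.prod_inv_distrib]

/-- The bidiagonal cyclic matrix with diagonal entries `a i` and entries `c i` in the positions
`(i, i + 1)`, indices being taken modulo `m + 2`. -/
def cyclicBidiagonal {R : Type*} [CommRing R] {m : ℕ} (a c : Fin (m + 2) → R) :
    Matrix (Fin (m + 2)) (Fin (m + 2)) R :=
  Matrix.of fun i j => (if j = i then a i else 0) + (if j = i + 1 then c i else 0)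

variable {R : Type*} [CommRing R] {m : ℕ} (a c : Fin (m + 2) → R)

lemma fin_eq_add_one_iff {i j : Fin (m + 2)} :
    j = i + 1 ↔ (j : ℕ) = i + 1 ∨ (j : ℕ) = 0 ∧ (i : ℕ) = m + 1 := by
  rw [Fin.ext_iff, Fin.val_add_one]
  split_ifs with hi
  · have hi' : (i : ℕ) = m + 1 := by rw [hi, Fin.val_last]
    omega
  · have hi' : (i : ℕ) ≠ m + 1 := fun h => hi (Fin.ext h)
    omega

lemma cyclicBidiagonal_apply (i j : Fin (m + 2)) :
    cyclicBidiagonal a c i j = (if (j : ℕ) = i then a i else 0) +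
      (if (j : ℕ) = i + 1 ∨ (j : ℕ) = 0 ∧ (i : ℕ) = m + 1 then c i else 0) := by
  simp only [cyclicBidiagonal, Matrix.of_apply, Fin.ext_iff (a := j) (b := i), fin_eq_add_one_iff]

lemma det_cyclicBidiagonal_submatrix_succ_succ :
    ((cyclicBidiagonal a c).submatrix Fin.succ Fin.succ).det = ∏ i : Fin (m + 1), a i.succ := by
  rw [Matrix.det_of_isUpperTriangular]
  · simp [cyclicBidiagonal_apply]
  · intro i j hij
    have hji : (j : ℕ) < i := hij
    simp only [Matrix.submatrix_apply, cyclicBidiagonal_apply, Fin.val_succ]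
    rw [if_neg (by omega), if_neg (by omega), add_zero]

lemma det_cyclicBidiagonal_submatrix_castSucc_succ :
    ((cyclicBidiagonal a c).submatrix Fin.castSucc Fin.succ).det =
      ∏ i : Fin (m + 1), c i.castSucc := by
  rw [Matrix.det_of_isLowerTriangular]
  · simp [cyclicBidiagonal_apply]
  · intro i j hij
    have hij' : (i : ℕ) < j := hij
    simp only [Matrix.submatrix_apply, cyclicBidiagonal_apply, Fin.val_succ, Fin.val_castSucc]
    rw [if_neg (by omega), if_neg (by omega), add_zero]

theorem det_cyclicBidiagonal :
    (cyclicBidiagonal a c).det = ∏ i, a i + (-1) ^ (m + 1) * ∏ i, c i := by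
  have hcol : ∀ i, i ≠ 0 ∧ i ≠ Fin.last (m + 1) → cyclicBidiagonal a c i 0 = 0 := by
    rintro i ⟨hi0, hilast⟩
    have hi0' : (i : ℕ) ≠ 0 := fun h => hi0 (Fin.ext h)
    have hilast' : (i : ℕ) ≠ m + 1 := fun h => hilast (Fin.ext h)
    rw [cyclicBidiagonal_apply, Fin.val_zero, if_neg hi0'.symm, if_neg (by omega), add_zero]
  have hfirst : cyclicBidiagonal a c 0 0 = a 0 := by simp [cyclicBidiagonal_apply]
  have hlast : cyclicBidiagonal a c (Fin.last _) 0 = c (Fin.last _) := by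
    simp [cyclicBidiagonal_apply]
  rw [Matrix.det_succ_column_zero, Fintype.sum_eq_add 0 (Fin.last _) Fin.last_pos.ne
    fun i hi => by rw [hcol i hi, mul_zero, zero_mul]]
  simp only [Fin.succAbove_zero, Fin.succAbove_last]
  rw [det_cyclicBidiagonal_submatrix_succ_succ, det_cyclicBidiagonal_submatrix_castSucc_succ,
    hfirst, hlast, Fin.prod_univ_succ a, Fin.prod_univ_castSucc c, Fin.val_zero, Fin.val_last]
  ring

theorem adjugate_cyclicBidiagonal_diag (j : Fin (m + 2)) :
    (cyclicBidiagonal a c).adjugate j j = ∏ i ∈ univ.erase j, a i := by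
  have hrow : (cyclicBidiagonal a c).updateRow j (Pi.single j 1) =
      cyclicBidiagonal (Function.update a j 1) (Function.update c j 0) := by
    ext i k
    by_cases h : i = j
    · subst h
      simp [cyclicBidiagonal, Pi.single_apply]
    · simp [cyclicBidiagonal, h]
  have hc : ∏ i, Function.update c j 0 i = 0 :=
    Finset.prod_eq_zero (Finset.mem_univ j) (Function.update_self ..)
  rw [Matrix.adjugate_apply, hrow, det_cyclicBidiagonal, hc, mul_zero, add_zero,
    ← Finset.mul_prod_erase _ _ (Finset.mem_univ j), Function.update_self, one_mul]
  exact Finset.prod_congr rfl fun i hi => Function.update_of_ne (Finset.ne_of_mem_erase hi) ..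

end LinearAlgebra

section FiberAverages

variable {α ι : Type*}

lemma exists_section_extending {κ : Type*} {f : α → ι} (hf : Function.Surjective f) {t : κ → α}
    (ht : Function.Injective (f ∘ t)) :
    ∃ T : ι → α, Function.RightInverse T f ∧ ∀ k, T (f (t k)) = t k := by
  refine ⟨Function.extend (f ∘ t) t (Function.surjInv hf), fun i => ?_, ht.extend_apply t _⟩
  by_cases hi : ∃ k, (f ∘ t) k = i
  · obtain ⟨k, rfl⟩ := hi
    rw [ht.extend_apply, Function.comp_apply]
  · rw [Function.extend_apply' _ _ _ hi, Function.surjInv_eq hf]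

variable [Fintype α] [DecidableEq ι]

lemma filter_fiber_nonempty {f : α → ι} (hf : Function.Surjective f) (i : ι) :
    (univ.filter fun x => f x = i).Nonempty := by
  obtain ⟨x, rfl⟩ := hf i
  exact ⟨x, by simp⟩

lemma filter_comp_eq_piFinset {κ : Type*} [Fintype κ] [DecidableEq κ] (f : α → ι) (τ : κ → ι) :
    (univ.filter fun r : κ → α => f ∘ r = τ) =
      Fintype.piFinset fun k => univ.filter fun x => f x = τ k := by
  ext r
  simp [funext_iff]

/-- The entry `i j` is the proportion of the fiber over `i` that `g` moves into the fiber
over `j`. -/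
def fiberTransition (f : α → ι) (g : α → α) : Matrix ι ι ℚ :=
  Matrix.of fun i j => 𝔼 x with f x = i, if f (g x) = j then 1 else 0

lemma expect_fiber_comp [Fintype ι] {M : Type*} [AddCommGroup M] [Module ℚ M] [Module ℚ≥0 M]
    [IsScalarTower ℚ≥0 ℚ M] (f : α → ι) (g : α → α) (v : ι → M) (i : ι) :
    𝔼 x with f x = i, v (f (g x)) = ∑ j, fiberTransition f g i j • v j := by
  have hv : ∀ x, v (f (g x)) = ∑ j, (if f (g x) = j then (1 : ℚ) else 0) • v j := fun x => by simp
  simp only [hv, Finset.expect_sum_comm, fiberTransition, Matrix.of_apply]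
  refine Finset.sum_congr rfl fun j _ => ?_
  simp only [Finset.expect, smul_assoc, Finset.sum_smul]

lemma fiberTransition_mulVec_one [Fintype ι] {f : α → ι} (hf : Function.Surjective f)
    (g : α → α) : (fiberTransition f g).mulVec 1 = 1 := by
  ext i
  have h := expect_fiber_comp f g (fun _ => (1 : ℚ)) i
  rw [Finset.expect_const (filter_fiber_nonempty hf i)] at h
  simpa [Matrix.mulVec, dotProduct] using h.symm

variable [DecidableEq α]

/-- The permutations mapping every fiber of `f` onto itself. For the block map of a composition
of `N` this is the Young subgroup. -/
def fiberPerms (f : α → ι) : Finset (Equiv.Perm α) :=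
  univ.filter fun w => ∀ x, f (w x) = f x

lemma mem_fiberPerms {f : α → ι} {w : Equiv.Perm α} : w ∈ fiberPerms f ↔ ∀ x, f (w x) = f x := by
  simp [fiberPerms]

lemma fiberPerms_nonempty (f : α → ι) : (fiberPerms f).Nonempty :=
  ⟨1, mem_fiberPerms.2 fun _ => rfl⟩

lemma mul_mem_fiberPerms_iff {f : α → ι} {w : Equiv.Perm α} (hw : w ∈ fiberPerms f)
    (h : Equiv.Perm α) : h * w ∈ fiberPerms f ↔ h ∈ fiberPerms f := by
  rw [mem_fiberPerms] at hw
  rw [mem_fiberPerms, mem_fiberPerms, ← w.forall_congr_right (q := fun x => f (h x) = f x)]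
  simp only [Equiv.Perm.mul_apply, hw]

lemma swap_mem_fiberPerms {f : α → ι} {x y : α} (hxy : f x = f y) :
    Equiv.swap x y ∈ fiberPerms f := by
  rw [mem_fiberPerms]
  intro z
  rw [Equiv.swap_apply_def]
  split_ifs with hx hy
  · rw [hx, hxy]
  · rw [hy, hxy]
  · rfl

lemma exists_mem_fiberPerms_comp_section_eq {f : α → ι} {T U : ι → α}
    (hT : Function.RightInverse T f) (hU : Function.RightInverse U f) :
    ∃ w ∈ fiberPerms f, ∀ i, w (T i) = U i := by
  let w : α → α := fun x => Equiv.swap (T (f x)) (U (f x)) x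
  have hfw : ∀ x, f (w x) = f x := fun x =>
    mem_fiberPerms.1 (swap_mem_fiberPerms ((hT (f x)).trans (hU (f x)).symm)) x
  have hw : Function.Involutive w := fun x => by
    change Equiv.swap (T (f (w x))) (U (f (w x))) (w x) = x
    rw [hfw, Equiv.swap_apply_self]
  refine ⟨hw.toPerm, mem_fiberPerms.2 hfw, fun i => ?_⟩
  change Equiv.swap (T (f (T i))) (U (f (T i))) (T i) = U i
  rw [hT, Equiv.swap_apply_left]

lemma exists_mem_fiberPerms_comp_eq {κ : Type*} {f : α → ι} (hf : Function.Surjective f)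
    {t u : κ → α} (htu : f ∘ u = f ∘ t) (ht : Function.Injective (f ∘ t)) :
    ∃ w ∈ fiberPerms f, w ∘ t = u := by
  obtain ⟨T, hT, hTt⟩ := exists_section_extending hf ht
  obtain ⟨U, hU, hUu⟩ := exists_section_extending hf (htu ▸ ht)
  obtain ⟨w, hw, hwTU⟩ := exists_mem_fiberPerms_comp_section_eq hT hU
  refine ⟨w, hw, funext fun k => ?_⟩
  have hfk : f (u k) = f (t k) := congrFun htu k
  rw [Function.comp_apply, ← hTt, hwTU, ← hfk, hUu]

end FiberAverages

section Vandermonde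

variable {N b : ℕ}

/-- The row of the homogeneous Vandermonde matrix of the variables belonging to `x`. Powers
decrease along the row, so that the determinant is `Delta` without any sign. -/
def powRow (b : ℕ) (x : Fin N) : Fin (b + 1) → MvPolynomial (Fin N) ℚ :=
  fun c => X x ^ (c.rev : ℕ)

lemma Delta_eq_detRowAlternating (t : Fin (b + 1) → Fin N) :
    Delta t = Matrix.detRowAlternating fun k => powRow b (t k) := by
  let x : Fin (b + 1) → MvPolynomial (Fin N) ℚ := fun k => X (t k)
  have hrows : (Matrix.projVandermonde 1 x).det =
      Matrix.detRowAlternating fun k => powRow b (t k) := by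
    refine congrArg Matrix.det (Matrix.ext fun k c => ?_)
    simp [Matrix.projVandermonde_apply, powRow, x]
  rw [← hrows, Matrix.det_projVandermonde, Delta, Finset.prod_filter, ← Finset.univ_product_univ,
    Finset.prod_product]
  refine Finset.prod_congr rfl fun i _ => ?_
  simp [← Finset.prod_filter, Finset.filter_lt_eq_Ioi, x]

lemma Delta_comp_perm (t : Fin (b + 1) → Fin N) (π : Equiv.Perm (Fin (b + 1))) :
    Delta (t ∘ π) = Equiv.Perm.sign π • Delta t := by
  simp only [Delta_eq_detRowAlternating]
  exact Matrix.detRowAlternating.map_perm (fun k => powRow b (t k)) π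

lemma Delta_eq_zero_of_not_injective {t : Fin (b + 1) → Fin N} (ht : ¬ Function.Injective t) :
    Delta t = 0 := by
  rw [Delta_eq_detRowAlternating]
  exact AlternatingMap.map_eq_zero_of_not_injective _ _ fun h => ht (h.of_comp (f := powRow b))

lemma permAct_Delta (w : Equiv.Perm (Fin N)) (t : Fin (b + 1) → Fin N) :
    permAct w (Delta t) = Delta (w ∘ t) := by
  simp [permAct, Delta]

lemma Delta_mem_hookSpan (t : Fin (b + 1) → Fin N) : Delta t ∈ hookSpan N b := by
  by_cases ht : Function.Injective t
  · have hsort : StrictMono (t ∘ Tuple.sort t) :=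
      (Tuple.monotone_sort t).strictMono_of_injective (ht.comp (Tuple.sort t).injective)
    have ht' : Delta t = Equiv.Perm.sign (Tuple.sort t)⁻¹ • Delta (t ∘ Tuple.sort t) := by
      rw [← Delta_comp_perm, Function.comp_assoc, ← Equiv.Perm.coe_mul, mul_inv_cancel,
        Equiv.Perm.coe_one, Function.comp_id]
    have hmem : Delta (t ∘ Tuple.sort t) ∈ hookSpan N b :=
      Submodule.subset_span ⟨_, hsort, rfl⟩
    rw [ht', Units.smul_def]
    exact zsmul_mem hmem _
  · rw [Delta_eq_zero_of_not_injective ht]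
    exact zero_mem _

variable (N b) in
lemma hookSpan_eq_span_range :
    hookSpan N b = Submodule.span ℚ (Set.range (Delta : (Fin (b + 1) → Fin N) → _)) := by
  refine le_antisymm (Submodule.span_mono ?_) (Submodule.span_le.2 ?_)
  · rintro _ ⟨t, -, rfl⟩
    exact ⟨t, rfl⟩
  · rintro _ ⟨t, rfl⟩
    exact Delta_mem_hookSpan t

lemma permAct_mem_hookSpan (w : Equiv.Perm (Fin N)) {P : MvPolynomial (Fin N) ℚ}
    (hP : P ∈ hookSpan N b) : permAct w P ∈ hookSpan N b := by
  have hmap : (hookSpan N b).map (permAct w) ≤ hookSpan N b := by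
    rw [hookSpan_eq_span_range, Submodule.map_span_le, ← hookSpan_eq_span_range]
    rintro _ ⟨t, rfl⟩
    rw [permAct_Delta]
    exact Delta_mem_hookSpan _
  exact hmap (Submodule.mem_map_of_mem hP)

instance : Module.Finite ℚ (hookSpan N b) := by
  rw [hookSpan_eq_span_range]
  exact Module.Finite.span_of_finite ℚ (Set.finite_range _)

variable {ι : Type*} [DecidableEq ι] (f : Fin N → ι)

/-- The `b + 1` normalized power sums of each block of variables, i.e. the blockwise averages
of the rows `powRow`. -/
def fiberMoments (b : ℕ) : Matrix ι (Fin (b + 1)) (MvPolynomial (Fin N) ℚ) :=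
  Matrix.of fun i => 𝔼 x with f x = i, powRow b x

/-- The average of `Delta r` over all `r` whose variables are taken from the blocks `τ`. -/
def fiberDelta (τ : Fin (b + 1) → ι) : MvPolynomial (Fin N) ℚ :=
  𝔼 r : Fin (b + 1) → Fin N with f ∘ r = τ, Delta r

lemma fiberDelta_eq_det (τ : Fin (b + 1) → ι) :
    fiberDelta f τ = ((fiberMoments f b).submatrix τ id).det := by
  rw [fiberDelta, filter_comp_eq_piFinset,
    Finset.expect_congr rfl fun r _ => Delta_eq_detRowAlternating r]
  exact (multilinearMap_map_expect
    (Matrix.detRowAlternating.toMultilinearMap.restrictScalars ℚ≥0) _ fun _ => powRow b).symm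

lemma fiberDelta_comp_perm (τ : Fin (b + 1) → ι) (π : Equiv.Perm (Fin (b + 1))) :
    fiberDelta f (τ ∘ π) = Equiv.Perm.sign π • fiberDelta f τ := by
  simp only [fiberDelta_eq_det]
  exact Matrix.detRowAlternating.map_perm (fun k => fiberMoments f b (τ k)) π

lemma fiberDelta_eq_zero_of_not_injective {τ : Fin (b + 1) → ι} (hτ : ¬ Function.Injective τ) :
    fiberDelta f τ = 0 := by
  rw [fiberDelta_eq_det]
  exact AlternatingMap.map_eq_zero_of_not_injective _ _ fun h =>
    hτ (h.of_comp (f := fiberMoments f b))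

lemma fiberDelta_mem_hookSpan (τ : Fin (b + 1) → ι) : fiberDelta f τ ∈ hookSpan N b := by
  rw [fiberDelta, Finset.expect, ← NNRat.cast_smul_eq_nnqsmul ℚ]
  exact Submodule.smul_mem _ _ (Submodule.sum_mem _ fun r _ => Delta_mem_hookSpan r)

variable {f}

lemma eval_comp_fiberDelta (hf : Function.Surjective f) (s : ι → ℚ) (τ : Fin (b + 1) → ι) :
    eval (s ∘ f) (fiberDelta f τ) =
      ∏ q : Fin (b + 1) × Fin (b + 1) with q.1 < q.2, (s (τ q.1) - s (τ q.2)) := by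
  have hne : (univ.filter fun r : Fin (b + 1) → Fin N => f ∘ r = τ).Nonempty :=
    filter_fiber_nonempty hf.comp_left τ
  rw [fiberDelta, addMonoidHomClass_map_expect]
  refine (Finset.expect_congr rfl fun r hr => ?_).trans (Finset.expect_const hne _)
  obtain rfl := (Finset.mem_filter.1 hr).2
  simp [Delta]

lemma eval_comp_fiberDelta_eq_zero_iff (hf : Function.Surjective f) (s : ι → ℚ)
    (τ : Fin (b + 1) → ι) :
    eval (s ∘ f) (fiberDelta f τ) = 0 ↔ ¬ Function.Injective (s ∘ τ) := by
  rw [eval_comp_fiberDelta hf, Finset.prod_eq_zero_iff, Function.not_injective_iff]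
  constructor
  · rintro ⟨q, hq, h⟩
    exact ⟨q.1, q.2, sub_eq_zero.1 h, (Finset.mem_filter.1 hq).2.ne⟩
  · rintro ⟨k, l, hkl, hne⟩
    rcases lt_or_gt_of_ne hne with h | h
    · exact ⟨(k, l), by simpa, sub_eq_zero.2 hkl⟩
    · exact ⟨(l, k), by simpa, sub_eq_zero.2 hkl.symm⟩

end Vandermonde

section FiberAverage

/-- The averaging operator over the permutations of the variables preserving every fiber of `f`;
it generalizes `rho`. -/
def fiberAverage {σ ι : Type*} [Fintype σ] [DecidableEq σ] [DecidableEq ι] (f : σ → ι) :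
    MvPolynomial σ ℚ →ₗ[ℚ] MvPolynomial σ ℚ :=
  ((fiberPerms f).card : ℚ)⁻¹ • ∑ w ∈ fiberPerms f, permAct w

variable {σ ι : Type*} [Fintype σ] [DecidableEq σ] [DecidableEq ι] {f : σ → ι}

lemma fiberAverage_apply (P : MvPolynomial σ ℚ) :
    fiberAverage f P = 𝔼 w ∈ fiberPerms f, permAct w P := by
  simp [fiberAverage, Finset.expect, ← NNRat.cast_smul_eq_nnqsmul ℚ]

lemma fiberAverage_permAct_of_mem {w : Equiv.Perm σ} (hw : w ∈ fiberPerms f)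
    (P : MvPolynomial σ ℚ) : fiberAverage f (permAct w P) = fiberAverage f P := by
  simp only [fiberAverage_apply]
  refine Finset.expect_equiv (Equiv.mulRight w) (fun h => (mul_mem_fiberPerms_iff hw h).symm)
    fun h _ => ?_
  simp [permAct, MvPolynomial.rename_rename, Equiv.Perm.coe_mul]

lemma fiberAverage_eq_self {P : MvPolynomial σ ℚ} (hP : ∀ w ∈ fiberPerms f, permAct w P = P) :
    fiberAverage f P = P := by
  rw [fiberAverage_apply, Finset.expect_congr rfl hP,
    Finset.expect_const (fiberPerms_nonempty f)]

end FiberAverage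

section AverageDelta

variable {N b : ℕ} {ι : Type*} [DecidableEq ι] {f : Fin N → ι}

lemma permAct_fiberDelta {w : Equiv.Perm (Fin N)} (hw : w ∈ fiberPerms f)
    (τ : Fin (b + 1) → ι) : permAct w (fiberDelta f τ) = fiberDelta f τ := by
  have hfw : ∀ r : Fin (b + 1) → Fin N, f ∘ (w ∘ r) = f ∘ r := fun r =>
    funext fun k => mem_fiberPerms.1 hw (r k)
  simp only [fiberDelta, addMonoidHomClass_map_expect, permAct_Delta]
  refine Finset.expect_equiv ((Equiv.refl _).arrowCongr w) (fun r => ?_) fun r _ => rfl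
  rw [Finset.mem_filter_univ, Finset.mem_filter_univ]
  exact iff_of_eq (congrArg (· = τ) (hfw r).symm)

lemma fiberAverage_Delta_eq_zero {t : Fin (b + 1) → Fin N} (ht : ¬ Function.Injective (f ∘ t)) :
    fiberAverage f (Delta t) = 0 := by
  by_cases ht' : Function.Injective t
  · obtain ⟨k, l, hkl, hne⟩ := Function.not_injective_iff.1 ht
    have hswap : permAct (Equiv.swap (t k) (t l)) (Delta t) = -Delta t := by
      have hcomp : ⇑(Equiv.swap (t k) (t l)) ∘ t = t ∘ ⇑(Equiv.swap k l) :=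
        funext fun i => ht'.swap_apply k l i
      rw [permAct_Delta, hcomp, Delta_comp_perm, Equiv.Perm.sign_swap hne, Units.neg_smul, one_smul]
    have hmem : Equiv.swap (t k) (t l) ∈ fiberPerms f := swap_mem_fiberPerms hkl
    have havg := fiberAverage_permAct_of_mem hmem (Delta t)
    rw [hswap, map_neg] at havg
    exact self_eq_neg.1 havg.symm
  · rw [Delta_eq_zero_of_not_injective ht', map_zero]

theorem fiberAverage_Delta (hf : Function.Surjective f) (t : Fin (b + 1) → Fin N) :
    fiberAverage f (Delta t) = fiberDelta f (f ∘ t) := by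
  by_cases ht : Function.Injective (f ∘ t)
  · have horbit : ∀ r : Fin (b + 1) → Fin N, f ∘ r = f ∘ t →
        fiberAverage f (Delta r) = fiberAverage f (Delta t) := by
      intro r hr
      obtain ⟨w, hw, rfl⟩ := exists_mem_fiberPerms_comp_eq hf hr ht
      rw [← permAct_Delta, fiberAverage_permAct_of_mem hw]
    have hne : (univ.filter fun r : Fin (b + 1) → Fin N => f ∘ r = f ∘ t).Nonempty :=
      ⟨t, by simp⟩
    calc fiberAverage f (Delta t)
        = 𝔼 r : Fin (b + 1) → Fin N with f ∘ r = f ∘ t, fiberAverage f (Delta r) := by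
          rw [Finset.expect_congr rfl fun r hr => horbit r (Finset.mem_filter.1 hr).2,
            Finset.expect_const hne]
      _ = fiberAverage f (fiberDelta f (f ∘ t)) := (addMonoidHomClass_map_expect _ _ _).symm
      _ = fiberDelta f (f ∘ t) := fiberAverage_eq_self fun w hw => permAct_fiberDelta hw _
  · rw [fiberAverage_Delta_eq_zero ht, fiberDelta_eq_zero_of_not_injective f ht]

variable [Fintype ι]

lemma expect_fiberDelta_comp (g : Fin N → Fin N) (τ : Fin (b + 1) → ι) :
    𝔼 r : Fin (b + 1) → Fin N with f ∘ r = τ, fiberDelta f (f ∘ g ∘ r) =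
      (((fiberTransition f g).map C * fiberMoments f b).submatrix τ id).det := by
  have hrow : ∀ k, 𝔼 x with f x = τ k, fiberMoments f b (f (g x)) =
      ((fiberTransition f g).map C * fiberMoments f b).submatrix τ id k := fun k => by
    rw [expect_fiber_comp f g (fiberMoments f b)]
    ext1 c
    have hentry : (∑ j, fiberTransition f g (τ k) j • fiberMoments f b j) c =
        ∑ j, (fiberTransition f g).map C (τ k) j * fiberMoments f b j c := by
      simp [MvPolynomial.smul_eq_C_mul]
    exact hentry
  simp only [fiberDelta_eq_det, filter_comp_eq_piFinset]
  refine (multilinearMap_map_expect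
    (Matrix.detRowAlternating.toMultilinearMap.restrictScalars ℚ≥0) _
    fun _ x => fiberMoments f b (f (g x))).symm.trans ?_
  exact congrArg Matrix.detRowAlternating (funext hrow)

theorem fiberAverage_permAct_fiberDelta (hf : Function.Surjective f) (g : Equiv.Perm (Fin N))
    (τ : Fin (b + 1) → ι) :
    fiberAverage f (permAct g (fiberDelta f τ)) =
      (((fiberTransition f g).map C * fiberMoments f b).submatrix τ id).det := by
  rw [fiberDelta, addMonoidHomClass_map_expect, addMonoidHomClass_map_expect,
    ← expect_fiberDelta_comp]
  exact Finset.expect_congr rfl fun r _ => by rw [permAct_Delta, fiberAverage_Delta hf]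

end AverageDelta

section Cofactors

variable {N b : ℕ}

section Moments

variable {ι : Type*} [DecidableEq ι] (f : Fin N → ι)

lemma fiberMoments_apply (i : ι) (c : Fin (b + 1)) :
    fiberMoments f b i c = 𝔼 x with f x = i, X x ^ (c.rev : ℕ) := by
  simp only [fiberMoments, Matrix.of_apply, Finset.expect_apply, powRow]

lemma fiberMoments_submatrix_succ :
    (fiberMoments f (b + 1)).submatrix id Fin.succ = fiberMoments f b := by
  ext1 i c
  simp [fiberMoments_apply, Fin.rev_succ]

variable {f}

lemma fiberMoments_last (hf : Function.Surjective f) (i : ι) :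
    fiberMoments f b i (Fin.last b) = 1 := by
  simp [fiberMoments_apply, Finset.expect_const (filter_fiber_nonempty hf i)]

end Moments

lemma adjugate_zero_apply {R : Type*} [CommRing R] {n : ℕ}
    (A : Matrix (Fin (n + 1)) (Fin (n + 1)) R) (j : Fin (n + 1)) :
    A.adjugate 0 j = (-1) ^ (j : ℕ) * ((A.submatrix id Fin.succ).submatrix j.succAbove id).det := by
  simp [Matrix.adjugate_fin_succ_eq_det_submatrix]

lemma exists_eq_succAbove_comp_of_injective {n : ℕ} {τ : Fin n → Fin (n + 1)}
    (hτ : Function.Injective τ) :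
    ∃ (k : Fin (n + 1)) (π : Equiv.Perm (Fin n)), τ = k.succAbove ∘ π := by
  have hcard : Fintype.card (Fin n) < Fintype.card (Fin (n + 1)) := by simp
  obtain ⟨k, hk⟩ : ∃ k, ∀ i, τ i ≠ k := by
    simpa [Function.Surjective] using
      mt (Fintype.card_le_of_surjective τ) hcard.not_ge
  choose π hπ using fun i => Fin.exists_succAbove_eq (hk i)
  have hπinj : Function.Injective π := fun i i' h => hτ (by rw [← hπ, ← hπ, h])
  exact ⟨k, Equiv.ofBijective π hπinj.bijective_of_finite, funext fun i => (hπ i).symm⟩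

variable (f : Fin N → Fin (b + 2))

/-- The cofactor of the square matrix `fiberMoments f (b + 1)` at row `j` and column `0`. Up to
sign it is the average of `Delta` over the choices of one variable from each block but the
`j`-th. -/
def fiberCofactor (j : Fin (b + 2)) : MvPolynomial (Fin N) ℚ :=
  (fiberMoments f (b + 1)).adjugate 0 j

lemma fiberCofactor_eq (j : Fin (b + 2)) :
    fiberCofactor f j = (-1 : ℚ) ^ (j : ℕ) • fiberDelta f j.succAbove := by
  rw [fiberCofactor, adjugate_zero_apply, fiberMoments_submatrix_succ, fiberDelta_eq_det]
  simp [MvPolynomial.smul_eq_C_mul]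

lemma fiberCofactor_mem_hookSpan (j : Fin (b + 2)) : fiberCofactor f j ∈ hookSpan N b := by
  rw [fiberCofactor_eq]
  exact Submodule.smul_mem _ _ (fiberDelta_mem_hookSpan f _)

lemma fiberDelta_mem_span_range_fiberCofactor (τ : Fin (b + 1) → Fin (b + 2)) :
    fiberDelta f τ ∈ Submodule.span ℚ (Set.range (fiberCofactor f)) := by
  by_cases hτ : Function.Injective τ
  · obtain ⟨k, π, rfl⟩ := exists_eq_succAbove_comp_of_injective hτ
    have hk : fiberDelta f k.succAbove = (-1 : ℚ) ^ (k : ℕ) • fiberCofactor f k := by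
      rw [fiberCofactor_eq, smul_smul, ← mul_pow, neg_one_mul, neg_neg, one_pow, one_smul]
    have hmem : fiberDelta f k.succAbove ∈ Submodule.span ℚ (Set.range (fiberCofactor f)) :=
      hk ▸ Submodule.smul_mem _ _ (Submodule.subset_span ⟨k, rfl⟩)
    rw [fiberDelta_comp_perm, Units.smul_def]
    exact zsmul_mem hmem _
  · rw [fiberDelta_eq_zero_of_not_injective f hτ]
    exact zero_mem _

variable {f}

lemma fiberAverage_mem_span_range_fiberCofactor (hf : Function.Surjective f)
    {P : MvPolynomial (Fin N) ℚ} (hP : P ∈ hookSpan N b) :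
    fiberAverage f P ∈ Submodule.span ℚ (Set.range (fiberCofactor f)) := by
  have hmap : (hookSpan N b).map (fiberAverage f) ≤
      Submodule.span ℚ (Set.range (fiberCofactor f)) := by
    rw [hookSpan_eq_span_range, Submodule.map_span_le]
    rintro _ ⟨t, rfl⟩
    rw [fiberAverage_Delta hf]
    exact fiberDelta_mem_span_range_fiberCofactor f _
  exact hmap (Submodule.mem_map_of_mem hP)

lemma sum_fiberCofactor (hf : Function.Surjective f) : ∑ j, fiberCofactor f j = 0 := by
  have hadj := congrFun (congrFun (Matrix.adjugate_mul (fiberMoments f (b + 1))) 0)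
    (Fin.last (b + 1))
  simpa [Matrix.mul_apply, fiberMoments_last hf, fiberCofactor] using hadj

theorem fiberAverage_permAct_fiberCofactor (hf : Function.Surjective f)
    (g : Equiv.Perm (Fin N)) (j : Fin (b + 2)) :
    fiberAverage f (permAct g (fiberCofactor f j)) =
      ∑ k, (fiberTransition f g).adjugate k j • fiberCofactor f k := by
  let M := (fiberTransition f g).map (C : ℚ →+* MvPolynomial (Fin N) ℚ)
  have hM : M.adjugate = (fiberTransition f g).adjugate.map C :=
    (RingHom.map_adjugate C (fiberTransition f g)).symm
  have hsub : (M * fiberMoments f (b + 1)).submatrix id Fin.succ = M * fiberMoments f b := by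
    rw [Matrix.submatrix_mul _ _ id id _ Function.bijective_id, Matrix.submatrix_id_id,
      fiberMoments_submatrix_succ]
  calc fiberAverage f (permAct g (fiberCofactor f j))
      = (-1 : ℚ) ^ (j : ℕ) • ((M * fiberMoments f b).submatrix j.succAbove id).det := by
        rw [fiberCofactor_eq, map_smul, map_smul, fiberAverage_permAct_fiberDelta hf]
        rfl
    _ = (M * fiberMoments f (b + 1)).adjugate 0 j := by
        rw [adjugate_zero_apply, hsub]
        simp [MvPolynomial.smul_eq_C_mul]
    _ = ∑ k, fiberCofactor f k * C ((fiberTransition f g).adjugate k j) := by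
        rw [Matrix.adjugate_mul_distrib, hM, Matrix.mul_apply]
        rfl
    _ = ∑ k, (fiberTransition f g).adjugate k j • fiberCofactor f k := by
        simp only [MvPolynomial.smul_eq_C_mul, mul_comm]

lemma eval_comp_fiberCofactor_eq_zero_iff (hf : Function.Surjective f) (s : Fin (b + 2) → ℚ)
    (j : Fin (b + 2)) :
    eval (s ∘ f) (fiberCofactor f j) = 0 ↔ ¬ Function.Injective (s ∘ j.succAbove) := by
  have hsign : (-1 : ℚ) ^ (j : ℕ) ≠ 0 := pow_ne_zero _ (neg_ne_zero.2 one_ne_zero)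
  rw [fiberCofactor_eq, smul_eval, mul_eq_zero_iff_left hsign,
    eval_comp_fiberDelta_eq_zero_iff hf]

lemma injective_update_id_comp_succAbove {n : ℕ} (i j : Fin (n + 1)) :
    Function.Injective (Function.update id j i ∘ i.succAbove) := by
  intro a a' h
  have ha := i.succAbove_ne a
  have ha' := i.succAbove_ne a'
  simp only [Function.comp_apply, Function.update_apply, id_eq] at h
  refine i.succAbove_right_injective ?_
  split_ifs at h with hj hj' hj'
  · rw [hj, hj']
  · exact absurd h.symm ha'
  · exact absurd h ha
  · exact h

lemma eq_of_sum_smul_fiberCofactor_eq_zero (hf : Function.Surjective f) {c : Fin (b + 2) → ℚ}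
    (hc : ∑ j, c j • fiberCofactor f j = 0) {i j : Fin (b + 2)} (hij : i ≠ j) : c i = c j := by
  -- Identifying the blocks `i` and `j` kills every cofactor other than the `i`-th and `j`-th.
  let e : Fin (b + 2) → ℚ := fun l => (l : ℕ)
  let s : Fin (b + 2) → ℚ := e ∘ Function.update id j i
  have he : Function.Injective e := fun l l' h => Fin.ext (Nat.cast_injective h)
  have hvanish : ∀ k, k ≠ i → k ≠ j → eval (s ∘ f) (fiberCofactor f k) = 0 := by
    intro k hki hkj
    obtain ⟨i', hi'⟩ := Fin.exists_succAbove_eq hki.symm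
    obtain ⟨j', hj'⟩ := Fin.exists_succAbove_eq hkj.symm
    rw [eval_comp_fiberCofactor_eq_zero_iff hf]
    refine fun hinj => hij ?_
    rw [← hi', ← hj', hinj (a₁ := i') (a₂ := j') (by simp [s, hi', hj', hij])]
  have hne : eval (s ∘ f) (fiberCofactor f i) ≠ 0 := fun hzero =>
    (eval_comp_fiberCofactor_eq_zero_iff hf s i).1 hzero
      (he.comp (injective_update_id_comp_succAbove i j))
  have hdiff : ∑ k, (c k - c j) • fiberCofactor f k = 0 := by
    simp only [sub_smul, Finset.sum_sub_distrib, hc, ← Finset.smul_sum, sum_fiberCofactor hf,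
      smul_zero, sub_zero]
  have heval := congrArg (eval (s ∘ f)) hdiff
  rw [map_sum, map_zero, Fintype.sum_eq_single i] at heval
  · simpa [hne, sub_eq_zero] using heval
  · intro k hk
    by_cases hkj : k = j
    · simp [hkj]
    · simp [hvanish k hk hkj]

lemma ker_linearCombination_fiberCofactor (hf : Function.Surjective f) :
    LinearMap.ker (Fintype.linearCombination ℚ (fiberCofactor f)) =
      Submodule.span ℚ {(1 : Fin (b + 2) → ℚ)} := by
  ext c
  rw [LinearMap.mem_ker, Fintype.linearCombination_apply, Submodule.mem_span_singleton]
  constructor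
  · intro hc
    refine ⟨c 0, funext fun j => ?_⟩
    by_cases hj : j = 0
    · simp [hj]
    · simpa using (eq_of_sum_smul_fiberCofactor_eq_zero hf hc hj).symm
  · rintro ⟨r, rfl⟩
    simp [← Finset.smul_sum, sum_fiberCofactor hf]

theorem trace_fiberAverage_comp_permAct (hf : Function.Surjective f) (g : Equiv.Perm (Fin N))
    (hW : ∀ P ∈ hookSpan N b, (fiberAverage f ∘ₗ permAct g) P ∈ hookSpan N b) :
    LinearMap.trace ℚ (hookSpan N b) ((fiberAverage f ∘ₗ permAct g).restrict hW) =
      (fiberTransition f g).adjugate.trace - (fiberTransition f g).det := by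
  let M := fiberTransition f g
  let φ₀ := Fintype.linearCombination ℚ (fiberCofactor f)
  have hφ₀ : ∀ c, φ₀ c ∈ hookSpan N b := fun c => by
    rw [Fintype.linearCombination_apply]
    exact Submodule.sum_mem _ fun j _ => Submodule.smul_mem _ _ (fiberCofactor_mem_hookSpan f j)
  have hAv : M.adjugate.toLin' 1 = M.det • 1 := by
    rw [Matrix.toLin'_apply]
    nth_rewrite 1 [← fiberTransition_mulVec_one hf g]
    rw [Matrix.mulVec_mulVec, Matrix.adjugate_mul, Matrix.smul_mulVec, Matrix.one_mulVec]
  rw [← Matrix.trace_toLin'_eq]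
  refine trace_eq_trace_sub_of_ker_eq_span_singleton (φ := φ₀.codRestrict _ hφ₀) ?_ ?_
    ((LinearMap.ker_codRestrict ..).trans (ker_linearCombination_fiberCofactor hf))
    one_ne_zero hAv
  · refine LinearMap.pi_ext' fun j => LinearMap.ext_ring <| Subtype.ext ?_
    have hcol := fiberAverage_permAct_fiberCofactor hf g j
    simpa [φ₀, Fintype.linearCombination_apply, Pi.single_apply] using hcol
  · rintro _ ⟨P, rfl⟩
    have hP := fiberAverage_mem_span_range_fiberCofactor hf (permAct_mem_hookSpan g P.2)
    rw [← Fintype.range_linearCombination] at hP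
    obtain ⟨c, hc⟩ := hP
    exact ⟨c, Subtype.ext hc⟩

end Cofactors

section Cycle

lemma fiberTransition_eq_cyclicBidiagonal {α : Type*} [Fintype α] {m : ℕ}
    {f : α → Fin (m + 2)} {z : Fin (m + 2) → α} (hz : Function.RightInverse z f) {g : α → α}
    (hgz : ∀ i, g (z i) = z (i + 1)) (hg : ∀ x ∉ Set.range z, g x = x) {n : Fin (m + 2) → ℕ}
    (hn : ∀ i, #{x | f x = i} = n i) :
    fiberTransition f g = cyclicBidiagonal (fun i => ((n i : ℚ) - 1) / n i)
      (fun i => (n i : ℚ)⁻¹) := by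
  classical
  ext i j
  have hzi : z i ∈ univ.filter fun x => f x = i := by simp [hz i]
  have hrest : ∀ x ∈ (univ.filter fun x => f x = i).erase (z i), f (g x) = i := by
    intro x hx
    obtain ⟨hxz, hfx⟩ := Finset.mem_erase.1 hx
    rw [Finset.mem_filter_univ] at hfx
    have hx' : x ∉ Set.range z := by
      rintro ⟨k, rfl⟩
      exact hxz (by rw [← hfx, hz k])
    rw [hg x hx', hfx]
  have hcard : 1 ≤ #{x | f x = i} := Finset.card_pos.2 ⟨_, hzi⟩
  have hcard' : (n i : ℚ) ≠ 0 := by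
    rw [← hn i]
    exact Nat.cast_ne_zero.2 (Nat.one_le_iff_ne_zero.1 hcard)
  rw [fiberTransition, Matrix.of_apply, Finset.expect_eq_sum_div_card,
    ← Finset.add_sum_erase _ _ hzi, hgz, hz (i + 1),
    Finset.sum_congr rfl fun x hx => by rw [hrest x hx], Finset.sum_const,
    Finset.card_erase_of_mem hzi, nsmul_eq_mul, Nat.cast_sub hcard, hn i, cyclicBidiagonal,
    Matrix.of_apply]
  simp only [eq_comm (a := j), Nat.cast_one]
  split_ifs <;> field_simp <;> ring

lemma esymVal_of_card_eq {α F : Type*} [DecidableEq α] [CommRing F] {A : Finset α} {k : ℕ}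
    (hA : #A = k) (v : α → F) : esymVal A k v = ∏ i ∈ A, v i := by
  subst hA
  rw [esymVal, Finset.powersetCard_self, Finset.sum_singleton]

lemma esymVal_of_card_eq_add_one {α F : Type*} [DecidableEq α] [CommRing F] {A : Finset α} {k : ℕ}
    (hA : #A = k + 1) (v : α → F) : esymVal A k v = ∑ j ∈ A, ∏ i ∈ A.erase j, v i := by
  refine (Finset.sum_nbij A.erase (fun j hj => ?_) A.erase_injOn (fun B hB => ?_)
    fun _ _ => rfl).symm
  · exact Finset.mem_powersetCard.2
      ⟨Finset.erase_subset .., by rw [Finset.card_erase_of_mem hj, hA, Nat.add_sub_cancel]⟩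
  · obtain ⟨hBA, hB⟩ := Finset.mem_powersetCard.1 (Finset.mem_coe.1 hB)
    obtain ⟨j, hj, rfl⟩ := Finset.exists_eq_insert_iff.2 ⟨hBA, hB ▸ hA.symm⟩
    exact ⟨j, Finset.mem_insert_self .., Finset.erase_insert hj⟩

lemma prod_erase_sub_one_div {κ K : Type*} [Fintype κ] [DecidableEq κ] [Field K] {w : κ → K}
    (hw : ∀ i, w i ≠ 0) (j : κ) :
    ∏ i ∈ univ.erase j, (w i - 1) / w i =
      (∏ i, w i)⁻¹ * (∏ i, (w i - 1) + ∏ i ∈ univ.erase j, (w i - 1)) := by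
  have herase : ∏ i ∈ univ.erase j, w i ≠ 0 := Finset.prod_ne_zero_iff.2 fun i _ => hw i
  have hwj := hw j
  rw [Finset.prod_div_distrib, ← Finset.mul_prod_erase _ w (Finset.mem_univ j),
    ← Finset.mul_prod_erase _ (fun i => w i - 1) (Finset.mem_univ j)]
  field_simp
  ring

theorem trace_adjugate_sub_det_cyclicBidiagonal {K : Type*} [Field K] {m : ℕ} {w : Fin (m + 2) → K}
    (hw : ∀ i, w i ≠ 0) :
    (cyclicBidiagonal (fun i => (w i - 1) / w i) fun i => (w i)⁻¹).adjugate.trace -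
        (cyclicBidiagonal (fun i => (w i - 1) / w i) fun i => (w i)⁻¹).det =
      (∏ i, w i)⁻¹ * ((m + 1) * esymVal univ (m + 2) (fun i => w i - 1) +
        esymVal univ (m + 1) (fun i => w i - 1) + (-1) ^ m) := by
  have hcard : #(univ : Finset (Fin (m + 2))) = m + 2 := Finset.card_fin _
  rw [esymVal_of_card_eq hcard, esymVal_of_card_eq_add_one hcard, det_cyclicBidiagonal,
    Matrix.trace]
  simp only [Matrix.diag_apply, adjugate_cyclicBidiagonal_diag, prod_erase_sub_one_div hw,
    ← Finset.mul_sum, Finset.sum_add_distrib, Finset.sum_const, hcard, Finset.prod_div_distrib,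
    Finset.prod_inv_distrib, nsmul_eq_mul]
  push_cast
  ring

end Cycle

section Blocks

/-- The index of the block of the composition `n` containing `x`. -/
def blockOf (n : Fin p → ℕ) (x : Fin (∑ t, n t)) : Fin p := (finSigmaFinEquiv.symm x).1

variable (n : Fin p → ℕ)

lemma emb_eq_finSigmaFinEquiv (j : Fin p) (i : Fin (n j)) :
    emb n j i = finSigmaFinEquiv ⟨j, i⟩ := by
  have hoffset : ∑ t with t < j, n t = ∑ t : Fin j, n (Fin.castLE j.2.le t) := by
    refine (Finset.sum_bij (fun k _ => Fin.castLE j.2.le k)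
      (fun k _ => Finset.mem_filter.2 ⟨Finset.mem_univ _, k.2⟩)
      (fun k _ l _ h => Fin.castLE_injective _ h) (fun k hk => ?_) fun _ _ => rfl).symm
    exact ⟨⟨k, (Finset.mem_filter.1 hk).2⟩, Finset.mem_univ _, rfl⟩
  refine Fin.ext ?_
  rw [finSigmaFinEquiv_apply]
  exact congrArg (· + (i : ℕ)) hoffset

lemma blockOf_emb (j : Fin p) (i : Fin (n j)) : blockOf n (emb n j i) = j := by
  rw [emb_eq_finSigmaFinEquiv, blockOf, Equiv.symm_apply_apply]

variable {n}

lemma blockOf_eq_iff_exists_emb {x : Fin (∑ t, n t)} {j : Fin p} :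
    blockOf n x = j ↔ ∃ i, x = emb n j i := by
  constructor
  · rintro rfl
    exact ⟨(finSigmaFinEquiv.symm x).2,
      ((emb_eq_finSigmaFinEquiv n _ _).trans (finSigmaFinEquiv.apply_symm_apply x)).symm⟩
  · rintro ⟨i, rfl⟩
    exact blockOf_emb n j i

variable (n)

lemma card_filter_blockOf_eq (j : Fin p) : #{x | blockOf n x = j} = n j := by
  have hinj : Function.Injective (emb n j) := fun i i' h => by
    simpa [emb_eq_finSigmaFinEquiv] using h
  have himage : univ.image (emb n j) = univ.filter fun x => blockOf n x = j := by
    ext x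
    rw [Finset.mem_image, Finset.mem_filter_univ, blockOf_eq_iff_exists_emb]
    simp [eq_comm]
  rw [← himage, Finset.card_image_of_injective _ hinj, Finset.card_fin]

lemma youngGroup_eq_fiberPerms : youngGroup n = fiberPerms (blockOf n) := by
  ext w
  rw [youngGroup, Finset.mem_filter_univ, mem_fiberPerms]
  simp only [← blockOf_eq_iff_exists_emb]
  refine ⟨fun h x => ?_, fun h j i => (h _).trans (blockOf_emb n j i)⟩
  obtain ⟨i, hi⟩ := blockOf_eq_iff_exists_emb.1 (rfl : blockOf n x = blockOf n x)
  exact (congrArg (fun y => blockOf n (w y)) hi).trans (h _ i)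

lemma rho_eq_fiberAverage : rho n = fiberAverage (blockOf n) := by
  rw [rho, fiberAverage, youngGroup_eq_fiberPerms]

end Blocks

theorem sphericalFunction_hook_p_eq_b_add_two_l_eq_p (p b ℓ : ℕ) (n : Fin p → ℕ) (hn : ∀ j, 0 < n j)
    (hp : p = b + 2) (hℓ2 : 2 ≤ ℓ) (hℓ : ℓ = b + 2)
    (g : Equiv.Perm (Fin (∑ t, n t)))
    (hg1 : ∀ j k : Fin p, (k : ℕ) = (j : ℕ) + 1 → (k : ℕ) < ℓ →
      g (emb n j ⟨0, hn j⟩) = emb n k ⟨0, hn k⟩)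
    (hg2 : ∀ j j' : Fin p, (j : ℕ) = ℓ - 1 → (j' : ℕ) = 0 →
      g (emb n j ⟨0, hn j⟩) = emb n j' ⟨0, hn j'⟩)
    (hg3 : ∀ a, (∀ j : Fin p, (j : ℕ) < ℓ → a ≠ emb n j ⟨0, hn j⟩) → g a = a)
    (hW : ∀ f ∈ hookSpan (∑ t, n t) b,
      ((rho n).comp (permAct g)) f ∈ hookSpan (∑ t, n t) b) :
    LinearMap.trace ℚ (hookSpan (∑ t, n t) b) (((rho n).comp (permAct g)).restrict hW)
      = (∏ i ∈ firstL p ℓ, (n i : ℚ))⁻¹ *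
        (((ℓ : ℚ) - 1) * esymVal (firstL p ℓ) ℓ (fun i => (n i : ℚ) - 1)
          + esymVal (firstL p ℓ) (ℓ - 1) (fun i => (n i : ℚ) - 1)
          + (-1 : ℚ) ^ b) := by
  subst hp hℓ
  let z : Fin (b + 2) → Fin (∑ t, n t) := fun j => emb n j ⟨0, hn j⟩
  have hz : Function.RightInverse z (blockOf n) := fun j => blockOf_emb n j _
  have hgz : ∀ j, g (z j) = z (j + 1) := by
    intro j
    by_cases hj : j = Fin.last _
    · exact hg2 j (j + 1) (by simp [hj]) (by simp [hj])
    · have hval := Fin.val_add_one_of_lt (Fin.lt_last_iff_ne_last.2 hj)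
      exact hg1 j (j + 1) hval (j + 1).2
  have hg : ∀ x ∉ Set.range z, g x = x := fun x hx => hg3 x fun j _ h => hx ⟨j, h.symm⟩
  have hfirst : firstL (b + 2) (b + 2) = univ := Finset.filter_true_of_mem fun j _ => j.2
  have hpos : ∀ j, (n j : ℚ) ≠ 0 := fun j => Nat.cast_ne_zero.2 (hn j).ne'
  have htrans := fiberTransition_eq_cyclicBidiagonal hz hgz hg (card_filter_blockOf_eq n)
  have htrace := trace_adjugate_sub_det_cyclicBidiagonal hpos
  simp only [rho_eq_fiberAverage] at hW ⊢
  have hcast : ((b + 2 : ℕ) : ℚ) - 1 = b + 1 := by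
    push_cast
    ring
  rw [trace_fiberAverage_comp_permAct hz.surjective g hW, htrans, htrace, hfirst, hcast]
  rfl

end
end

section
/- Let F be a field, let q, r, s be integers with 0 ≤ q ≤ r ≤ s, and let y_1,…,y_r ∈ F be nonzero. Then (∏_{i=1}^{r} y_i) · Σ_{U ⊆ {1,…,s}, #U = q} ∏_{j ∈ U ∩ {1,…,r}} (1 + 1/y_j) = Σ_{k=0}^{min(q,r)} C(s−k, q−k) · e_{r−k}(y_1,…,y_r), where C(·,·) is the binomial coefficient. -/
noncomputable section

/-!
Expanding `∏ j ∈ U ∩ A, (1 + (y j)⁻¹)` over the subsets `T` of `U ∩ A` and multiplying by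
`∏ i ∈ A, y i` leaves the monomial `∏ i ∈ A \ T, y i`. A fixed `T ⊆ A` of size `k` lies in exactly
`(#S - k).choose (q - k)` of the `q`-subsets `U` of `S`, and as `T` runs over the `k`-subsets of
`A`, its complement runs over the `(#A - k)`-subsets, which gives `e_{#A - k}`.
-/

section

open Finset

variable {α M F : Type*} [DecidableEq α]

theorem prod_mul_prod_inv_of_subset [CommGroupWithZero M] {A T : Finset α} {y : α → M}
    (hTA : T ⊆ A) (hy : ∀ i ∈ T, y i ≠ 0) :
    (∏ i ∈ A, y i) * ∏ j ∈ T, (y j)⁻¹ = ∏ i ∈ A \ T, y i := by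
  rw [prod_inv_distrib, ← prod_sdiff hTA, mul_inv_cancel_right₀ (prod_ne_zero_iff.2 hy)]

theorem prod_mul_prod_one_add_inv [Semifield F] {A B : Finset α} {y : α → F}
    (hBA : B ⊆ A) (hy : ∀ i ∈ B, y i ≠ 0) :
    (∏ i ∈ A, y i) * ∏ j ∈ B, (1 + (y j)⁻¹) = ∑ T ∈ B.powerset, ∏ i ∈ A \ T, y i := by
  rw [prod_one_add, mul_sum]
  refine sum_congr rfl fun T hT ↦ ?_
  have hTB : T ⊆ B := mem_powerset.1 hT
  exact prod_mul_prod_inv_of_subset (hTB.trans hBA) fun i hi ↦ hy i (hTB hi)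

theorem sum_powersetCard_sdiff [AddCommMonoid M] {A : Finset α} {k : ℕ} (hk : k ≤ #A)
    (f : Finset α → M) :
    ∑ T ∈ A.powersetCard k, f (A \ T) = ∑ B ∈ A.powersetCard (#A - k), f B := by
  have sdiff_mem {m n : ℕ} (hmn : #A - m = n) {T : Finset α} (hT : T ∈ A.powersetCard m) :
      A \ T ∈ A.powersetCard n := by
    obtain ⟨hTA, hcard⟩ := mem_powersetCard.1 hT
    exact mem_powersetCard.2 ⟨sdiff_subset, by rw [card_sdiff_of_subset hTA, hcard, hmn]⟩
  have sdiff_sdiff_self {m : ℕ} {T : Finset α} (hT : T ∈ A.powersetCard m) : A \ (A \ T) = T :=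
    Finset.sdiff_sdiff_eq_self (mem_powersetCard.1 hT).1
  exact sum_nbij' (A \ ·) (A \ ·) (fun _ ↦ sdiff_mem rfl)
    (fun _ ↦ sdiff_mem (Nat.sub_sub_self hk)) (fun _ ↦ sdiff_sdiff_self) (fun _ ↦ sdiff_sdiff_self)
    fun _ _ ↦ rfl

theorem sum_powerset_inter [AddCommMonoid M] (A U : Finset α) (f : Finset α → M) :
    ∑ T ∈ (U ∩ A).powerset, f T =
      ∑ k ∈ range (min #U #A + 1), ∑ T ∈ A.powersetCard k with T ⊆ U, f T := by
  have card_mem : ∀ T ∈ (U ∩ A).powerset, #T ∈ range (min #U #A + 1) := by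
    intro T hT
    obtain ⟨hTU, hTA⟩ := subset_inter_iff.1 (mem_powerset.1 hT)
    exact mem_range_succ_iff.2 (le_min (card_le_card hTU) (card_le_card hTA))
  rw [← sum_fiberwise_of_maps_to card_mem]
  refine sum_congr rfl fun k _ ↦ sum_congr ?_ fun _ _ ↦ rfl
  ext T
  simp only [mem_filter, mem_powerset, mem_powersetCard, subset_inter_iff]
  tauto

theorem sum_powersetCard_sum_filter_subset [AddCommMonoid M] {A S : Finset α} (hAS : A ⊆ S)
    {k q : ℕ} (hkq : k ≤ q) (f : Finset α → M) :
    ∑ U ∈ S.powersetCard q, ∑ T ∈ A.powersetCard k with T ⊆ U, f T =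
      (#S - k).choose (q - k) • ∑ T ∈ A.powersetCard k, f T := by
  calc
    _ = ∑ T ∈ A.powersetCard k, ∑ U ∈ S.powersetCard q with T ⊆ U, f T := by
      refine sum_comm' fun U T ↦ ?_
      simp only [mem_filter]
      tauto
    _ = _ := by
      rw [smul_sum]
      refine sum_congr rfl fun T hT ↦ ?_
      obtain ⟨hTA, rfl⟩ := mem_powersetCard.1 hT
      rw [sum_const, card_filter_powersetCard_subset T S q (hTA.trans hAS) hkq]

theorem sum_powersetCard_sum_powerset_inter [AddCommMonoid M] {A S : Finset α} (hAS : A ⊆ S)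
    (q : ℕ) (f : Finset α → M) :
    ∑ U ∈ S.powersetCard q, ∑ T ∈ (U ∩ A).powerset, f T =
      ∑ k ∈ range (min q #A + 1),
        (#S - k).choose (q - k) • ∑ T ∈ A.powersetCard k, f T := by
  calc
    _ = ∑ U ∈ S.powersetCard q, ∑ k ∈ range (min q #A + 1),
          ∑ T ∈ A.powersetCard k with T ⊆ U, f T :=
      sum_congr rfl fun U hU ↦ by rw [sum_powerset_inter, (mem_powersetCard.1 hU).2]
    _ = ∑ k ∈ range (min q #A + 1), ∑ U ∈ S.powersetCard q,
          ∑ T ∈ A.powersetCard k with T ⊆ U, f T := sum_comm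
    _ = _ := sum_congr rfl fun k hk ↦ sum_powersetCard_sum_filter_subset hAS
      ((mem_range_succ_iff.1 hk).trans (min_le_left q #A)) f

theorem prod_mul_sum_powersetCard_general [Field F] {A S : Finset α} (hAS : A ⊆ S) (q : ℕ)
    {y : α → F} (hy : ∀ i ∈ A, y i ≠ 0) :
    (∏ i ∈ A, y i) * ∑ U ∈ S.powersetCard q, ∏ j ∈ U ∩ A, (1 + (y j)⁻¹) =
      ∑ k ∈ range (min q #A + 1),
        ((#S - k).choose (q - k) : F) * esymVal A (#A - k) y := by
  calc
    _ = ∑ U ∈ S.powersetCard q, ∑ T ∈ (U ∩ A).powerset, ∏ i ∈ A \ T, y i := by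
      rw [mul_sum]
      exact sum_congr rfl fun U _ ↦
        prod_mul_prod_one_add_inv inter_subset_right fun i hi ↦ hy i (mem_of_mem_inter_right hi)
    _ = ∑ k ∈ range (min q #A + 1),
          (#S - k).choose (q - k) • ∑ T ∈ A.powersetCard k, ∏ i ∈ A \ T, y i :=
      sum_powersetCard_sum_powerset_inter hAS q _
    _ = _ := by
      refine sum_congr rfl fun k hk ↦ ?_
      have hkA : k ≤ #A := (mem_range_succ_iff.1 hk).trans (min_le_right q #A)
      rw [sum_powersetCard_sdiff hkA fun B ↦ ∏ i ∈ B, y i, nsmul_eq_mul, esymVal]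

end

/-- Lemma 5.6: a generalization of the generating function for elementary symmetric
polynomials. -/
theorem prod_mul_sum_powersetCard {F : Type*} [Field F] (q r s : ℕ)
    (hqr : q ≤ r) (hrs : r ≤ s) (y : ℕ → F) (hy : ∀ i ∈ Finset.Icc 1 r, y i ≠ 0) :
    (∏ i ∈ Finset.Icc 1 r, y i) *
        ∑ U ∈ (Finset.Icc 1 s).powersetCard q, ∏ j ∈ U ∩ Finset.Icc 1 r, (1 + (y j)⁻¹)
      = ∑ k ∈ Finset.range (min q r + 1),
          ((s - k).choose (q - k) : F) * esymVal (Finset.Icc 1 r) (r - k) y := by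
  simpa only [Nat.card_Icc, Nat.add_sub_cancel] using
    prod_mul_sum_powersetCard_general (Finset.Icc_subset_Icc_right hrs) q hy

end
end

section
/- Let b ≥ 0, m ≥ 1, let 2 ≤ ℓ ≤ b+m, and let n_1,…,n_ℓ be positive integers. Then Σ_{S ⊆ {1,…,b+m}, #S = m} ∏_{i ∈ {1,…,ℓ}∖S} (n_i − 1)/n_i = (1/(n_1⋯n_ℓ)) · Σ_{k=0}^{min(m,ℓ)} ((b+1)_{m−k}/(m−k)!) · e_{ℓ−k}(n_1−1,…,n_ℓ−1). -/
/-!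
Put `x i = n i - 1`. Multiplying the summand of `S` by `∏ i ∈ L, n i`, where `L = {1, …, ℓ}`, turns
it into `(∏ i ∈ L ∩ S, (x i + 1)) * ∏ i ∈ L \ S, x i`, which expands as the sum of
`∏ i ∈ L \ T, x i` over `T ⊆ L ∩ S`. Exchanging the sums over `S` and `T`, a set `T` of size `k`
occurs once for every `S ⊇ T`, that is, `(b + m - k).choose (m - k)` times, and the products
`∏ i ∈ L \ T, x i` over these `T` add up to `e_{ℓ - k}(x)`.
-/

noncomputable section

section

open Finset

theorem sum_powerset_eq_sum_range_sum_powersetCard {α M : Type*} [AddCommMonoid M] {s : Finset α}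
    {N : ℕ} (hs : #s ≤ N) (f : Finset α → M) :
    ∑ t ∈ s.powerset, f t = ∑ k ∈ range (N + 1), ∑ t ∈ s.powersetCard k, f t := by
  rw [sum_powerset]
  refine sum_subset (range_mono (by lia)) fun k _ hk => ?_
  rw [powersetCard_eq_empty.2 (by simpa using hk), sum_empty]

variable {α : Type*} [DecidableEq α]

theorem sum_powersetCard_sum_powersetCard_inter {M : Type*} [AddCommMonoid M] {U L : Finset α}
    (hLU : L ⊆ U) {k m : ℕ} (hkm : k ≤ m) (f : Finset α → M) :
    ∑ S ∈ U.powersetCard m, ∑ T ∈ (L ∩ S).powersetCard k, f T =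
      (#U - k).choose (m - k) • ∑ T ∈ L.powersetCard k, f T := by
  have sum_swap : ∑ S ∈ U.powersetCard m, ∑ T ∈ (L ∩ S).powersetCard k, f T =
      ∑ T ∈ L.powersetCard k, ∑ S ∈ U.powersetCard m with T ⊆ S, f T :=
    sum_comm' fun S T => by simp only [mem_powersetCard, mem_filter, subset_inter_iff]; tauto
  rw [sum_swap, smul_sum]
  refine sum_congr rfl fun T hT => ?_
  obtain ⟨hTL, rfl⟩ := mem_powersetCard.1 hT
  rw [sum_const, card_filter_powersetCard_subset T U m (hTL.trans hLU) hkm]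

theorem prod_inter_add_one_mul_prod_sdiff {R : Type*} [CommSemiring R] (L S : Finset α)
    (x : α → R) :
    (∏ i ∈ L ∩ S, (x i + 1)) * ∏ i ∈ L \ S, x i =
      ∑ T ∈ (L ∩ S).powerset, ∏ i ∈ L \ T, x i := by
  simp_rw [add_comm (x _) 1, prod_add, prod_const_one, one_mul, sum_mul]
  refine sum_congr rfl fun T hT => ?_
  have hTS : T ⊆ S := (mem_powerset.1 hT).trans inter_subset_right
  have hdisj : Disjoint ((L ∩ S) \ T) (L \ S) :=
    (disjoint_sdiff_inter L S).symm.mono_left sdiff_subset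
  have hunion : (L ∩ S) \ T ∪ L \ S = L \ T := by grind
  rw [← prod_union hdisj, hunion]

theorem sum_powersetCard_prod_sdiff {R : Type*} [CommRing R] (L : Finset α) {k : ℕ} (hk : k ≤ #L)
    (x : α → R) :
    ∑ T ∈ L.powersetCard k, ∏ i ∈ L \ T, x i = esymVal L (#L - k) x := by
  have sdiff_mem {j : ℕ} {T : Finset α} (hT : T ∈ L.powersetCard j) :
      L \ T ∈ L.powersetCard (#L - j) := by
    obtain ⟨hTL, rfl⟩ := mem_powersetCard.1 hT
    exact mem_powersetCard.2 ⟨sdiff_subset, card_sdiff_of_subset hTL⟩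
  have sdiff_sdiff_cancel {j : ℕ} {T : Finset α} (hT : T ∈ L.powersetCard j) :
      L \ (L \ T) = T :=
    Finset.sdiff_sdiff_eq_self (mem_powersetCard.1 hT).1
  exact sum_bij' (fun T _ => L \ T) (fun T _ => L \ T) (fun _ => sdiff_mem)
    (fun _ hT => Nat.sub_sub_self hk ▸ sdiff_mem hT) (fun _ => sdiff_sdiff_cancel)
    (fun _ => sdiff_sdiff_cancel) fun _ _ => rfl

theorem sum_powersetCard_prod_inter_add_one_mul_prod_sdiff {R : Type*} [CommRing R]
    {U L : Finset α} (hLU : L ⊆ U) (m : ℕ) (x : α → R) :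
    ∑ S ∈ U.powersetCard m, (∏ i ∈ L ∩ S, (x i + 1)) * ∏ i ∈ L \ S, x i =
      ∑ k ∈ range (min m #L + 1), ((#U - k).choose (m - k) : R) * esymVal L (#L - k) x := by
  have card_inter_le {S : Finset α} (hS : S ∈ U.powersetCard m) : #(L ∩ S) ≤ min m #L :=
    le_min ((card_le_card inter_subset_right).trans_eq (mem_powersetCard.1 hS).2)
      (card_le_card inter_subset_left)
  calc
    _ = ∑ S ∈ U.powersetCard m, ∑ k ∈ range (min m #L + 1),
          ∑ T ∈ (L ∩ S).powersetCard k, ∏ i ∈ L \ T, x i :=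
      sum_congr rfl fun S hS => by
        rw [prod_inter_add_one_mul_prod_sdiff,
          sum_powerset_eq_sum_range_sum_powersetCard (card_inter_le hS)]
    _ = ∑ k ∈ range (min m #L + 1), ∑ S ∈ U.powersetCard m,
          ∑ T ∈ (L ∩ S).powersetCard k, ∏ i ∈ L \ T, x i := sum_comm
    _ = _ := sum_congr rfl fun k hk => by
      obtain ⟨hkm, hkL⟩ := le_min_iff.1 (mem_range_succ_iff.1 hk)
      rw [sum_powersetCard_sum_powersetCard_inter hLU hkm, sum_powersetCard_prod_sdiff L hkL,
        nsmul_eq_mul]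

theorem prod_sdiff_div_eq_inv_prod_mul {K : Type*} [CommGroupWithZero K] {L : Finset α}
    {y : α → K} (hy : ∀ i ∈ L, y i ≠ 0) (S : Finset α) (x : α → K) :
    ∏ i ∈ L \ S, x i / y i =
      (∏ i ∈ L, y i)⁻¹ * ((∏ i ∈ L ∩ S, y i) * ∏ i ∈ L \ S, x i) := by
  have hinter : ∏ i ∈ L ∩ S, y i ≠ 0 :=
    prod_ne_zero_iff.2 fun i hi => hy i (mem_of_mem_inter_left hi)
  rw [prod_div_distrib, ← prod_inter_mul_prod_sdiff L S y, mul_inv_rev, mul_assoc,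
    inv_mul_cancel_left₀ hinter, div_eq_inv_mul]

theorem poch_natCast_add_one_div_factorial (b j : ℕ) :
    poch ((b : ℚ) + 1) j / j.factorial = (b + j).choose j := by
  have hpoch : poch ((b : ℚ) + 1) j = (b + 1).ascFactorial j := by
    simp [poch, Nat.ascFactorial_eq_prod_range]
  rw [hpoch, Nat.ascFactorial_eq_factorial_mul_choose, Nat.cast_mul,
    mul_div_cancel_left₀ _ (Nat.cast_ne_zero.2 j.factorial_ne_zero)]

theorem sum_over_S_eq_general {K : Type*} [Field K] {b m : ℕ} {U L : Finset α} (hLU : L ⊆ U)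
    (hU : #U = b + m) {y : α → K} (hy : ∀ i ∈ L, y i ≠ 0) :
    ∑ S ∈ U.powersetCard m, ∏ i ∈ L \ S, (y i - 1) / y i =
      (∏ i ∈ L, y i)⁻¹ * ∑ k ∈ range (min m #L + 1),
        ((b + (m - k)).choose (m - k) : K) * esymVal L (#L - k) fun i => y i - 1 := by
  have hsum := sum_powersetCard_prod_inter_add_one_mul_prod_sdiff hLU m fun i => y i - 1
  simp only [sub_add_cancel] at hsum
  simp_rw [prod_sdiff_div_eq_inv_prod_mul hy, ← mul_sum, hsum]
  congr 1
  refine sum_congr rfl fun k hk => ?_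
  have hkm : k ≤ m := (mem_range_succ_iff.1 hk).trans (min_le_left m #L)
  rw [hU, Nat.add_sub_assoc hkm]

end

/-- Proposition 5.8 (the summation over all `S`), for `2 ≤ ℓ ≤ b+m`. -/
theorem sum_over_S_eq (b m ℓ : ℕ) (hm : 1 ≤ m) (hℓ2 : 2 ≤ ℓ) (hℓ : ℓ ≤ b + m)
    (n : ℕ → ℕ) (hn : ∀ i ∈ Finset.Icc 1 ℓ, 0 < n i) :
    ∑ S ∈ (Finset.Icc 1 (b + m)).powersetCard m,
        ∏ i ∈ Finset.Icc 1 ℓ \ S, ((n i : ℚ) - 1) / (n i : ℚ)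
      = (∏ i ∈ Finset.Icc 1 ℓ, (n i : ℚ))⁻¹ *
          ∑ k ∈ Finset.range (min m ℓ + 1),
            poch ((b : ℚ) + 1) (m - k) / (Nat.factorial (m - k)) *
              esymVal (Finset.Icc 1 ℓ) (ℓ - k) (fun i => (n i : ℚ) - 1) := by
  simpa [poch_natCast_add_one_div_factorial] using
    sum_over_S_eq_general (Finset.Icc_subset_Icc_right hℓ) (by simp : _ = b + m)
      (y := fun i => (n i : ℚ)) fun i hi => Nat.cast_ne_zero.2 (hn i hi).ne'

end
end
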